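/- Let n be even, let k be an integer with n/3 + √(2n·ln 2) ≤ k < n/2, and let m = M_{k−1} + m' where 0 ≤ m' ≤ 2·binom(n/2, k). Fix a set X ⊆ [n] with |X| = n/2, let 𝒜 be any family of ⌊m'/2⌋ k-element subsets of X, let ℬ be any family of ⌈m'/2⌉ sets of size n−k containing X, and let ℱ*_m = ℋ_{k−1} ∪ 𝒜 ∪ ℬ. Then c(n,m) = c(ℱ*_m); that is, every family 𝒢 of m subsets of [n] satisfies c(𝒢) ≤ c(ℱ*_m). -/

import Mathlib

open Finset

/-- `crossComp 𝒜 ℬ` is the number of pairs `(A, B) ∈ 𝒜 × ℬ` with `A ⊊ B`. -/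
def crossComp {n : ℕ} (𝒜 ℬ : Finset (Finset (Fin n))) : ℕ :=
  ((𝒜 ×ˢ ℬ).filter (fun p => p.1 ⊂ p.2)).card

/-- `compCount ℱ` is the number of comparable pairs in `ℱ`, i.e. the number of unordered
pairs `{A, B}` of distinct sets in `ℱ` with `A ⊆ B` or `B ⊆ A`. -/
def compCount {n : ℕ} (ℱ : Finset (Finset (Fin n))) : ℕ := crossComp ℱ ℱ

/-- `maxComp n m` is `c(n,m)`, the maximum number of comparable pairs over all families of
`m` subsets of `[n]`. -/
def maxComp (n m : ℕ) : ℕ :=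
  ((Finset.univ : Finset (Finset (Fin n))).powersetCard m).sup compCount

/-- `Hfam n k = ℋ_k` is the family of subsets of `[n]` of size at most `k` or at least `n - k`. -/
def Hfam (n k : ℕ) : Finset (Finset (Fin n)) :=
  Finset.univ.filter (fun F => F.card ≤ k ∨ n - k ≤ F.card)

/-- `Mnum n k = M_k = |ℋ_k|`. -/
def Mnum (n k : ℕ) : ℕ := (Hfam n k).card


def tl (N r : ℕ) : ℕ := ∑ i ∈ range (N+1), N.choose i * (if i ≤ r then 1 else 0)

lemma tl_mono {N N' r : ℕ} (h : N ≤ N') : tl N r ≤ tl N' r := by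
  unfold tl
  calc _ ≤ ∑ i ∈ range (N+1), N'.choose i * (if i ≤ r then 1 else 0) := by
        apply Finset.sum_le_sum; intro i _
        exact Nat.mul_le_mul_right _ (Nat.choose_le_choose i h)
    _ ≤ _ := by
        apply Finset.sum_le_sum_of_subset
        intro i; simp; omega

lemma cheb (N : ℕ) : ∑ i ∈ range (N+1), (N.choose i : ℤ) * (2*(i:ℤ)-(N:ℤ))^2 = (N:ℤ) * 2^N := by
  induction N with
  | zero => simp
  | succ N ih =>
    have h := Finset.sum_choose_succ_mul (R := ℤ) (fun i _ => (2*(i:ℤ)-((N+1:ℕ):ℤ))^2) N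
    rw [show N + 1 + 1 = N + 2 from rfl, h, ← Finset.sum_add_distrib]
    have h2 : ∑ i ∈ range (N+1), (N.choose i : ℤ) = 2^N := by
      exact_mod_cast Nat.sum_range_choose N
    have : ∀ i ∈ range (N+1), ((N.choose i : ℤ) * (2*(i:ℤ)-((N+1:ℕ):ℤ))^2 + (N.choose i : ℤ) * (2*((i+1:ℕ):ℤ)-((N+1:ℕ):ℤ))^2) = 2 * ((N.choose i : ℤ) * (2*i-N)^2) + 2 * (N.choose i : ℤ) := by
      intro i _; push_cast; ring
    rw [Finset.sum_congr rfl this, Finset.sum_add_distrib, ← Finset.mul_sum, ← Finset.mul_sum, ih, h2]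
    push_cast; ring

lemma tl_bound {N r : ℕ} (h : N < 2*(r+1)) (h1 : 0 < N) (h8 : 8 * (N:ℤ) ≤ (2*(r+1)-N)^2) :
    15 * 2^N ≤ 16 * tl N r := by
  set t : ℤ := ∑ i ∈ range (N+1), (N.choose i : ℤ) * (if i ≤ r then 0 else 1) with ht
  have e1 : (tl N r : ℤ) + t = 2^N := by
    have h2 : ∑ i ∈ range (N+1), (N.choose i : ℤ) = 2^N := by
      exact_mod_cast Nat.sum_range_choose N
    rw [← h2, ht]; unfold tl; push_cast
    rw [← Finset.sum_add_distrib]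
    apply Finset.sum_congr rfl; intro i _; split_ifs <;> simp
  have e2 : t = ∑ i ∈ range (N+1), (N.choose i : ℤ) * (if N - i ≤ r then 0 else 1) := by
    rw [ht, ← Finset.sum_range_reflect]
    apply Finset.sum_congr rfl; intro i hi
    have : i ≤ N := by simp at hi; omega
    simp only [Nat.add_sub_cancel, Nat.choose_symm this]
  have e3 : 2 * t * (2*(r+1)-N)^2 ≤ N * 2^N := by
    rw [← cheb, two_mul]; nth_rewrite 1 [ht]; rw [e2, ← Finset.sum_add_distrib, Finset.sum_mul]
    apply Finset.sum_le_sum; intro i hi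
    have hi : i ≤ N := by simp at hi; omega
    rw [← mul_add, mul_assoc]
    apply mul_le_mul_of_nonneg_left _ (by positivity)
    by_cases a : i ≤ r
    · by_cases b : N - i ≤ r
      · simp [a, b]; positivity
      · simp only [a, b, if_true, if_false, zero_add, one_mul]
        have : 2*((r:ℤ)+1)-N ≤ N - 2*i := by omega
        nlinarith [this, h]
    · have b : N - i ≤ r := by omega
      simp only [a, b, if_true, if_false, add_zero, one_mul]
      have : 2*((r:ℤ)+1)-N ≤ 2*i-N := by omega
      have : 0 ≤ 2*((r:ℤ)+1)-N := by omega
      nlinarith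
  have ht0 : 0 ≤ t := by
    rw [ht]; apply Finset.sum_nonneg; intro i _; positivity
  have e4 : 16 * t ≤ 2^N := by
    have : (N:ℤ) * (16 * t) ≤ N * 2^N := by nlinarith
    exact le_of_mul_le_mul_left this (by exact_mod_cast h1)
  zify; linarith

lemma card_sub {n : ℕ} (A : Finset (Fin n)) (r : ℕ) :
    (univ.filter (fun B : Finset (Fin n) => B ⊆ A ∧ B.card ≤ r)).card = tl A.card r := by
  have h := Finset.sum_powerset_apply_card (fun i => if i ≤ r then 1 else 0) (x := A)
  simp only [smul_eq_mul] at h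
  unfold tl
  rw [← h, Finset.sum_boole]
  simp only [Nat.cast_id]
  congr 1; ext B; simp

lemma card_sup {n : ℕ} (A : Finset (Fin n)) (r : ℕ) :
    (univ.filter (fun B : Finset (Fin n) => A ⊆ B ∧ n - r ≤ B.card)).card = tl (n - A.card) r := by
  have : n - A.card = Aᶜ.card := by simp [Finset.card_compl]
  rw [this, ← card_sub]
  apply Finset.card_bij (fun B _ => Bᶜ)
  · intro B hB; simp at hB ⊢
    refine ⟨hB.1, ?_⟩
    rw [Finset.card_compl]; simp; omega
  · intro B _ C _ h; exact compl_injective h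
  · intro B hB
    refine ⟨Bᶜ, ?_, by simp⟩
    simp at hB ⊢
    refine ⟨by rw [Finset.subset_compl_comm]; exact hB.1, ?_⟩
    rw [Finset.card_compl]; simp; omega

def dg {n : ℕ} (F : Finset (Finset (Fin n))) (G : Finset (Fin n)) : ℕ :=
  (F.filter (fun B => G ⊂ B)).card + (F.filter (fun B => B ⊂ G)).card

lemma comp_sum {n : ℕ} (F P : Finset (Finset (Fin n))) :
    crossComp F P = ∑ A ∈ F, ∑ B ∈ P, if A ⊂ B then 1 else 0 := by
  unfold crossComp
  rw [← Finset.sum_product', Finset.card_filter]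

lemma dg_sum {n : ℕ} (F P : Finset (Finset (Fin n))) :
    ∑ G ∈ P, dg F G = crossComp P F + crossComp F P := by
  rw [comp_sum, comp_sum, Finset.sum_comm (s := F), ← Finset.sum_add_distrib]
  apply Finset.sum_congr rfl; intro G _
  unfold dg; rw [Finset.card_filter, Finset.card_filter]

lemma comp_union {n : ℕ} (F P : Finset (Finset (Fin n))) (h : Disjoint F P) :
    compCount (F ∪ P) = compCount F + ∑ G ∈ P, dg F G + compCount P := by
  rw [dg_sum]; unfold compCount
  simp only [comp_sum, Finset.sum_union h, Finset.sum_add_distrib]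
  ring

lemma comp_union_le {n : ℕ} (F P : Finset (Finset (Fin n))) (h : Disjoint F P) :
    compCount (F ∪ P) ≤ compCount F + ∑ G ∈ P, dg (F ∪ P) G := by
  rw [comp_union F P h]
  have : ∑ G ∈ P, dg (F ∪ P) G = ∑ G ∈ P, dg F G + ∑ G ∈ P, dg P G := by
    rw [← Finset.sum_add_distrib]; apply Finset.sum_congr rfl; intro G _
    unfold dg; simp only [Finset.card_filter, Finset.sum_union h]; ring
  rw [this, dg_sum P P]; unfold compCount; omega

lemma dg_le {n : ℕ} (F : Finset (Finset (Fin n))) (G : Finset (Fin n)) :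
    dg F G ≤ 2^(n - G.card) + 2^G.card := by
  unfold dg
  apply Nat.add_le_add
  · have : n - G.card = Gᶜ.card := by simp [Finset.card_compl]
    rw [this, ← Finset.card_powerset]
    apply Finset.card_le_card_of_injOn (fun B => Bᶜ)
    · intro B hB; simp at hB ⊢; exact hB.2.1
    · intro B _ C _ h; exact compl_injective h
  · rw [← Finset.card_powerset]
    apply Finset.card_le_card
    intro B hB; simp at hB ⊢; exact hB.2.1

lemma dg_le_card {n : ℕ} (F : Finset (Finset (Fin n))) (G : Finset (Fin n)) :
    dg F G ≤ F.card := by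
  unfold dg
  rw [← Finset.card_union_of_disjoint]
  · apply Finset.card_le_card; intro B; simp; tauto
  · rw [Finset.disjoint_filter]; intro B _ h h'; exact lt_asymm h h'

lemma pow_conv {n a j : ℕ} (h1 : a ≤ j) (h2 : j + a ≤ n) : 2^(n-j) + 2^j ≤ 2^(n-a) + 2^a := by
  obtain ⟨d, rfl⟩ := Nat.exists_eq_add_of_le h1
  obtain ⟨e, rfl⟩ := Nat.exists_eq_add_of_le h2
  have e1 : a + d + a + e - (a+d) = a + e := by omega
  have e2 : a + d + a + e - a = a + e + d := by omega
  rw [e1, e2, pow_add _ (a+e), pow_add _ a e, pow_add _ a d]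
  have : 1 ≤ 2^d := Nat.one_le_two_pow
  have : 1 ≤ 2^e := Nat.one_le_two_pow
  obtain ⟨x, hx⟩ := Nat.exists_eq_add_of_le ‹1 ≤ 2^d›
  obtain ⟨y, hy⟩ := Nat.exists_eq_add_of_le ‹1 ≤ 2^e›
  rw [hx, hy]
  nlinarith [Nat.zero_le (2^a*x*y)]

lemma numeric (n : ℕ) (hn : Even n) (k : ℕ)
    (hk1 : (n : ℝ) / 3 + Real.sqrt (2 * n * Real.log 2) ≤ k)
    (hk2 : (k : ℝ) < (n : ℝ) / 2) :
    2 * k + 2 ≤ n ∧ n + 25 ≤ 3 * k ∧ 12 * (n:ℤ) ≤ (3*k-n)^2 := by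
  have hl : (0.693:ℝ) < Real.log 2 := by linarith [Real.log_two_gt_d9]
  set s := Real.sqrt (2 * n * Real.log 2) with hs
  have hn0 : (0:ℝ) ≤ n := by positivity
  have s0 : 0 ≤ s := Real.sqrt_nonneg _
  have s2 : s^2 = 2 * n * Real.log 2 := Real.sq_sqrt (by positivity)
  have s3 : 1.386 * (n:ℝ) ≤ s^2 := by rw [s2]; nlinarith
  have hnpos : (0:ℝ) < n := by
    have : (0:ℝ) ≤ k := by positivity
    linarith
  have s4 : s < n/6 := by linarith
  have hn49 : (49:ℝ) < n := by
    have : s^2 < (n/6)^2 := by nlinarith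
    have : (n:ℝ) * 49 < n * n := by nlinarith
    exact lt_of_mul_lt_mul_left this hn0
  have d0 : 3 * s ≤ 3 * k - n := by linarith
  have d1 : 12.4 * (n:ℝ) ≤ (3*k-n)^2 := by nlinarith
  have hk2' : 2 * k < n := by
    have : (2:ℝ) * k < n := by linarith
    exact_mod_cast this
  refine ⟨by obtain ⟨p, rfl⟩ := hn; omega, ?_, ?_⟩
  · have : (24:ℝ) < 3 * k - n := by
      by_contra hc
      push Not at hc
      nlinarith
    have : (n:ℝ) + 24 < 3 * k := by linarith
    have : n + 24 < 3 * k := by exact_mod_cast this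
    omega
  · have : 12 * (n:ℝ) ≤ (3*k-n)^2 := by linarith
    exact_mod_cast this

lemma tl1 {n k : ℕ} (h1 : 2 * k + 2 ≤ n) (h2 : n + 25 ≤ 3 * k) (h3 : 12 * (n:ℤ) ≤ (3*k-n)^2) :
    15 * 2^(n-k+1) ≤ 16 * tl (n-k+1) (k-2) := by
  apply tl_bound (by omega) (by omega)
  have e1 : ((n-k+1:ℕ):ℤ) = n - k + 1 := by omega
  have e2 : ((k-2:ℕ):ℤ) = k - 2 := by omega
  rw [e1, e2]
  have : (n:ℤ) + 25 ≤ 3 * k := by exact_mod_cast h2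
  nlinarith

lemma tl2 {n k : ℕ} (h1 : 2 * k + 2 ≤ n) (h2 : n + 25 ≤ 3 * k) (h3 : 12 * (n:ℤ) ≤ (3*k-n)^2) :
    15 * 2^(n-k+2) ≤ 16 * tl (n-k+2) (k-2) := by
  apply tl_bound (by omega) (by omega)
  have e1 : ((n-k+2:ℕ):ℤ) = n - k + 2 := by omega
  have e2 : ((k-2:ℕ):ℤ) = k - 2 := by omega
  rw [e1, e2]
  have : (n:ℤ) + 25 ≤ 3 * k := by exact_mod_cast h2
  nlinarith

lemma tl3 {n k : ℕ} (h1 : 2 * k + 2 ≤ n) (h2 : n + 25 ≤ 3 * k) (h3 : 12 * (n:ℤ) ≤ (3*k-n)^2) :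
    15 * 2^(n-k) ≤ 16 * tl (n-k) (k-1) := by
  apply tl_bound (by omega) (by omega)
  have e1 : ((n-k:ℕ):ℤ) = n - k := by omega
  have e2 : ((k-1:ℕ):ℤ) = k - 1 := by omega
  rw [e1, e2]
  have : (n:ℤ) + 25 ≤ 3 * k := by exact_mod_cast h2
  nlinarith

lemma choose_small {p k : ℕ} (h1 : k + 1 ≤ p) (h2 : 2*p + 25 ≤ 3 * k)
    (h3 : 12 * (2*p:ℤ) ≤ (3*k-2*p)^2) :
    8 * p.choose k ≤ 2^p := by
  have h := cheb p
  have h4 : (p.choose k : ℤ) * (2*(k:ℤ)-(p:ℤ))^2 ≤ p * 2^p := by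
    rw [← h]
    apply Finset.single_le_sum (f := fun i : ℕ => (p.choose i : ℤ) * (2*(i:ℤ)-(p:ℤ))^2)
    · intro i _; positivity
    · simp; omega
  have h5 : 8 * (p:ℤ) ≤ (2*(k:ℤ)-(p:ℤ))^2 := by
    have : (k:ℤ) + 1 ≤ p := by exact_mod_cast h1
    have : 2*(p:ℤ) + 25 ≤ 3*k := by exact_mod_cast h2
    nlinarith
  have h6 : (p:ℤ) * (8 * p.choose k) ≤ p * 2^p := by
    have : (0:ℤ) ≤ p.choose k := by positivity
    nlinarith
  have : (8 * p.choose k : ℤ) ≤ 2^p := le_of_mul_le_mul_left h6 (by omega)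
  exact_mod_cast this

lemma mem_H {n k : ℕ} (h1 : 2 * k + 2 ≤ n) (h2 : n + 25 ≤ 3 * k) (F : Finset (Fin n)) :
    F ∈ Hfam n (k-1) ↔ F.card < k ∨ n < F.card + k := by
  unfold Hfam; simp; omega

/-- Number of pairs of `H` touching `S`. -/
lemma touch {n k : ℕ} (h1 : 2 * k + 2 ≤ n) (h2 : n + 25 ≤ 3 * k) (h3 : 12 * (n:ℤ) ≤ (3*k-n)^2)
    (S : Finset (Finset (Fin n))) (hS : S ⊆ Hfam n (k-1)) :
    S.card * (5 * 2^(n-k)) ≤ 4 *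
      (((Hfam n (k-1)) ×ˢ (Hfam n (k-1))).filter (fun p => p.1 ⊂ p.2 ∧ (p.1 ∈ S ∨ p.2 ∈ S))).card := by
  set H := Hfam n (k-1) with hH
  have mH : ∀ F, F ∈ H ↔ F.card < k ∨ n < F.card + k := mem_H h1 h2
  set wA : Finset (Fin n) → Finset (Fin n) → ℕ := fun A B =>
    if A ⊂ B ∧ A.card < k ∧ n - (k-2) ≤ B.card then (if A.card = k-1 then 2 else 1) else 0 with hwA
  set wB : Finset (Fin n) → Finset (Fin n) → ℕ := fun B A =>
    if A ⊂ B ∧ n < B.card + k ∧ A.card ≤ k-2 then (if B.card = n-k+1 then 2 else 1) else 0 with hwB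
  have key : ∑ A ∈ S, (∑ B ∈ H, wA A B + ∑ B ∈ H, wB A B) ≤ 3 * ((H ×ˢ H).filter (fun p => p.1 ⊂ p.2 ∧ (p.1 ∈ S ∨ p.2 ∈ S))).card := by
    have eA : ∑ A ∈ S, ∑ B ∈ H, wA A B = ∑ A ∈ H, ∑ B ∈ H, if A ∈ S then wA A B else 0 := by
      rw [← Finset.sum_subset hS]
      · apply Finset.sum_congr rfl; intro A hA; simp [hA]
      · intro A _ hA; simp [hA]
    have eB : ∑ B ∈ S, ∑ A ∈ H, wB B A = ∑ A ∈ H, ∑ B ∈ H, if B ∈ S then wB B A else 0 := by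
      rw [Finset.sum_comm (s := H), ← Finset.sum_subset hS]
      · apply Finset.sum_congr rfl; intro A hA; simp [hA]
      · intro A _ hA; simp [hA]
    rw [Finset.sum_add_distrib, eA, eB, ← Finset.sum_add_distrib, Finset.card_filter, Finset.sum_product, Finset.mul_sum]
    apply Finset.sum_le_sum; intro A hA
    rw [← Finset.sum_add_distrib, Finset.mul_sum]
    apply Finset.sum_le_sum; intro B hB
    simp only [hwA, hwB]
    by_cases hAB : A ⊂ B
    · by_cases a : A ∈ S <;> by_cases b : B ∈ S <;> simp only [hAB, a, b, true_and, if_true, if_false, or_true, true_or, or_self] <;> (try split_ifs) <;> omega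
    · simp [hAB]
  have low : ∀ A ∈ S, 15 * 2^(n-k+2) ≤ 16 * (∑ B ∈ H, wA A B + ∑ B ∈ H, wB A B) := by
    intro A hA
    rcases (mH A).1 (hS hA) with h | h
    · refine le_trans ?_ (Nat.mul_le_mul_left 16 (Nat.le_add_right _ _))
      have : ∑ B ∈ H, wA A B = (if A.card = k-1 then 2 else 1) * tl (n - A.card) (k-2) := by
        rw [← card_sup, Finset.card_filter, Finset.mul_sum]
        rw [← Finset.sum_subset (Finset.subset_univ H)]
        · apply Finset.sum_congr rfl; intro B hB
          have : A ⊂ B ∧ A.card < k ∧ n - (k-2) ≤ B.card ↔ A ⊆ B ∧ n - (k-2) ≤ B.card := by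
            constructor
            · rintro ⟨a, b, c⟩; exact ⟨a.1, c⟩
            · rintro ⟨a, c⟩
              refine ⟨Finset.ssubset_iff_subset_ne.2 ⟨a, ?_⟩, h, c⟩
              rintro rfl; omega
          simp only [hwA, this]
          split_ifs <;> simp
        · intro B _ hB
          rw [mH] at hB
          have : ¬ (A ⊆ B ∧ n - (k-2) ≤ B.card) := by rintro ⟨_, _⟩; omega
          rw [if_neg this, mul_zero]
      rw [this]
      split_ifs with hc
      · have := tl1 h1 h2 h3
        rw [hc, show n - (k-1) = n-k+1 by omega]
        rw [pow_succ] at *; omega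
      · have := tl2 h1 h2 h3
        have := tl_mono (r := k-2) (show n-k+2 ≤ n - A.card by omega)
        omega
    · refine le_trans ?_ (Nat.mul_le_mul_left 16 (Nat.le_add_left _ _))
      have : ∑ B ∈ H, wB A B = (if A.card = n-k+1 then 2 else 1) * tl (A.card) (k-2) := by
        rw [← card_sub, Finset.card_filter, Finset.mul_sum]
        rw [← Finset.sum_subset (Finset.subset_univ H)]
        · apply Finset.sum_congr rfl; intro B hB
          have : B ⊂ A ∧ n < A.card + k ∧ B.card ≤ k-2 ↔ B ⊆ A ∧ B.card ≤ k-2 := by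
            constructor
            · rintro ⟨a, b, c⟩; exact ⟨a.1, c⟩
            · rintro ⟨a, c⟩
              refine ⟨Finset.ssubset_iff_subset_ne.2 ⟨a, ?_⟩, h, c⟩
              rintro rfl; omega
          simp only [hwB, this]
          split_ifs <;> simp
        · intro B _ hB
          rw [mH] at hB
          have : ¬ (B ⊆ A ∧ B.card ≤ k-2) := by rintro ⟨_, _⟩; omega
          rw [if_neg this, mul_zero]
      rw [this]
      split_ifs with hc
      · have := tl1 h1 h2 h3
        rw [hc]
        rw [pow_succ] at *; omega
      · have := tl2 h1 h2 h3
        have := tl_mono (r := k-2) (show n-k+2 ≤ A.card by omega)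
        omega
  have tot := Finset.sum_le_sum low
  rw [Finset.sum_const, smul_eq_mul, ← Finset.mul_sum] at tot
  rw [pow_add] at tot
  have : S.card * (15 * (2^(n-k) * 2^2)) = 12 * (S.card * (5 * 2^(n-k))) := by ring
  rw [this] at tot
  omega

lemma dgH {n k : ℕ} (h1 : 2 * k + 2 ≤ n) (h2 : n + 25 ≤ 3 * k) (G : Finset (Fin n))
    (hG : G.card = k ∨ G.card = n - k) :
    dg (Hfam n (k-1)) G + 1 = tl (n-k) (k-1) + 2^k := by
  set H := Hfam n (k-1) with hH
  have mH : ∀ F, F ∈ H ↔ F.card < k ∨ n < F.card + k := mem_H h1 h2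
  unfold dg
  rcases hG with h | h
  · have e1 : (H.filter (fun B => G ⊂ B)) = univ.filter (fun B => G ⊆ B ∧ n - (k-1) ≤ B.card) := by
      ext B; simp only [mem_filter, mH, mem_univ, true_and]
      constructor
      · rintro ⟨a, b⟩
        have := Finset.card_lt_card b
        exact ⟨b.1, by omega⟩
      · rintro ⟨a, b⟩
        refine ⟨by omega, Finset.ssubset_iff_subset_ne.2 ⟨a, ?_⟩⟩
        rintro rfl; omega
    have e2 : (H.filter (fun B => B ⊂ G)) = G.ssubsets := by
      ext B; simp only [mem_filter, mH, mem_ssubsets]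
      constructor
      · rintro ⟨a, b⟩; exact b
      · intro b
        have := Finset.card_lt_card b
        exact ⟨by omega, b⟩
    rw [e1, e2, card_sup, h]
    have : G.ssubsets.card + 1 = 2^k := by
      rw [← h, ← Finset.card_powerset, Finset.ssubsets, Finset.card_erase_add_one]
      simp
    omega
  · have e1 : (H.filter (fun B => B ⊂ G)) = univ.filter (fun B => B ⊆ G ∧ B.card ≤ k-1) := by
      ext B; simp only [mem_filter, mH, mem_univ, true_and]
      constructor
      · rintro ⟨a, b⟩
        have := Finset.card_lt_card b
        exact ⟨b.1, by omega⟩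
      · rintro ⟨a, b⟩
        refine ⟨by omega, Finset.ssubset_iff_subset_ne.2 ⟨a, ?_⟩⟩
        rintro rfl; omega
    have e2 : (H.filter (fun B => G ⊂ B)).card = Gᶜ.ssubsets.card := by
      apply Finset.card_bij (fun B _ => Bᶜ)
      · intro B hB; simp at hB ⊢; exact hB.2
      · intro B _ C _ h; exact compl_injective h
      · intro B hB
        refine ⟨Bᶜ, ?_, by simp⟩
        simp only [mem_ssubsets, mem_filter, mH] at hB ⊢
        have hB' : G ⊂ Bᶜ := by
          have := compl_lt_compl_iff_lt.2 hB
          simpa using this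
        have := Finset.card_lt_card hB'
        exact ⟨by omega, hB'⟩
    rw [e1, e2, card_sub, h]
    have : Gᶜ.ssubsets.card + 1 = 2^k := by
      have hc : Gᶜ.card = k := by rw [Finset.card_compl]; simp; omega
      rw [← hc, ← Finset.card_powerset, Finset.ssubsets, Finset.card_erase_add_one]
      simp
    omega

lemma main_upper {n k m' : ℕ} (hn : Even n) (h1 : 2 * k + 2 ≤ n) (h2 : n + 25 ≤ 3 * k)
    (h3 : 12 * (n:ℤ) ≤ (3*k-n)^2) (hm' : m' ≤ 2 * (n / 2).choose k)
    (P : Finset (Finset (Fin n))) (hP : P.card = m') (hPH : Disjoint (Hfam n (k-1)) P) (h : ℕ)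
    (hh : h + 1 = tl (n-k) (k-1) + 2^k) :
    compCount (Hfam n (k-1) ∪ P) ≤ compCount (Hfam n (k-1)) + m' * h + (m'/2) * ((m'+1)/2) := by
  set H := Hfam n (k-1) with hH
  have mH : ∀ F, F ∈ H ↔ F.card < k ∨ n < F.card + k := mem_H h1 h2
  have mP : ∀ F ∈ P, k ≤ F.card ∧ F.card + k ≤ n := by
    intro F hF
    have : F ∉ H := fun hc => (Finset.disjoint_left.1 hPH) hc hF
    rw [mH] at this; omega
  rw [comp_union _ _ hPH]
  set a := P.filter (fun G => G.card = k) with ha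
  set b := P.filter (fun G => G.card = n-k) with hb
  set r := P.filter (fun G => ¬ (G.card = k ∨ G.card = n-k)) with hr
  have hab : P.filter (fun G => (G.card = k ∨ G.card = n-k)) = a ∪ b := by
    rw [Finset.filter_or]
  have dab : Disjoint a b := by
    rw [Finset.disjoint_filter]; intro B _ h h'; omega
  have dabr : Disjoint (a ∪ b) r := by
    rw [← hab]; exact Finset.disjoint_filter_filter_not _ _ _
  have hPu : P = (a ∪ b) ∪ r := by
    rw [← hab]; exact (Finset.filter_union_filter_not_eq _ _).symm
  have hcard : a.card + b.card + r.card = m' := by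
    rw [← hP, congrArg Finset.card hPu,
      Finset.card_union_of_disjoint dabr, Finset.card_union_of_disjoint dab]
  have c1 : compCount P ≤ a.card * b.card + r.card * m' := by
    have : compCount P ≤ compCount (a ∪ b) + ∑ G ∈ r, dg P G := by
      conv_lhs => rw [hPu]
      refine (comp_union_le _ _ dabr).trans ?_
      rw [← hPu]
    refine this.trans (Nat.add_le_add ?_ ?_)
    · unfold compCount crossComp
      rw [← Finset.card_product]
      apply Finset.card_le_card
      rintro ⟨A, B⟩ hAB
      simp only [mem_filter, mem_product, mem_union, ha, hb] at hAB ⊢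
      have := Finset.card_lt_card hAB.2
      obtain ⟨⟨x, y⟩, z⟩ := hAB
      rcases x with x | x <;> rcases y with y | y
      · omega
      · exact ⟨x, y⟩
      · omega
      · omega
    · rw [← smul_eq_mul]
      apply Finset.sum_le_card_nsmul
      intro G _; rw [← hP]; exact dg_le_card _ _
  have c2 : ∑ G ∈ P, dg H G + r.card * m' ≤ m' * h := by
    have e1 : ∑ G ∈ P, dg H G = ∑ G ∈ a ∪ b, dg H G + ∑ G ∈ r, dg H G := by
      rw [← Finset.sum_union dabr, ← hPu]
    have e2 : ∑ G ∈ a ∪ b, dg H G = (a.card + b.card) * h := by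
      rw [← Finset.card_union_of_disjoint dab, ← smul_eq_mul]
      apply Finset.sum_const_nat
      intro G hG
      rw [← hab, mem_filter] at hG
      have := dgH h1 h2 G hG.2
      rw [← hH] at this
      omega
    have e3 : ∑ G ∈ r, (dg H G + m') ≤ r.card * h := by
      rw [← smul_eq_mul]
      apply Finset.sum_le_card_nsmul
      intro G hG
      rw [hr, mem_filter] at hG
      have q1 := mP G hG.1
      have q2 := dg_le H G
      have q3 := pow_conv (n := n) (a := k+1) (j := G.card) (by omega) (by omega)
      have q4 := tl3 h1 h2 h3
      obtain ⟨p, hp⟩ := hn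
      have hnp : n / 2 = p := by omega
      rw [hnp] at hm'
      have q5 : 8 * p.choose k ≤ 2^p := by
        apply choose_small (by omega) (by omega)
        have : (n:ℤ) = 2 * p := by omega
        rw [← this]; exact h3
      have q6 : 2^(n-k) = 2 * 2^(n-(k+1)) := by
        rw [← pow_succ']; congr 1; omega
      have q7 : 4 * 2^k ≤ 2^(n-k) := by
        have : 4 * 2^k = 2^(k+2) := by ring
        rw [this]; apply Nat.pow_le_pow_right <;> omega
      have q8 : 2 * 2^p ≤ 2^(n-k) := by
        rw [← pow_succ']; apply Nat.pow_le_pow_right <;> omega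
      have q9 : 16 ≤ 2^(n-k) := by
        have : 2^4 ≤ 2^(n-k) := by apply Nat.pow_le_pow_right <;> omega
        omega
      have q10 : 2^(k+1) = 2 * 2^k := by ring
      omega
    rw [Finset.sum_add_distrib, Finset.sum_const, smul_eq_mul] at e3
    rw [e1, e2, ← hcard]
    rw [← hcard] at e3
    nlinarith
  have c3 : a.card * b.card ≤ (m'/2) * ((m'+1)/2) := by
    have : a.card + b.card ≤ m' := by omega
    rcases Nat.even_or_odd' m' with ⟨q, hq | hq⟩
    · have x1 : m'/2 = q := by omega
      have x2 : (m'+1)/2 = q := by omega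
      rw [x1, x2]
      have : a.card + b.card ≤ 2 * q := by omega
      zify at *
      nlinarith [sq_nonneg ((a.card:ℤ) - b.card)]
    · have x1 : m'/2 = q := by omega
      have x2 : (m'+1)/2 = q+1 := by omega
      rw [x1, x2]
      have h5 : a.card + b.card ≤ 2 * q + 1 := by omega
      rcases le_or_gt a.card q with hq | hq
      · obtain ⟨d, hd⟩ := Nat.exists_eq_add_of_le hq
        have : b.card ≤ q + 1 + d := by omega
        calc _ ≤ a.card * (q+1+d) := Nat.mul_le_mul_left _ this
          _ ≤ _ := by rw [hd]; nlinarith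
      · obtain ⟨d, hd⟩ := Nat.exists_eq_add_of_lt hq
        have hb' : b.card + d ≤ q := by omega
        rw [hd]; nlinarith
  omega

lemma push_H {n k m' : ℕ} (h1 : 2 * k + 2 ≤ n) (h2 : n + 25 ≤ 3 * k)
    (h3 : 12 * (n:ℤ) ≤ (3*k-n)^2)
    (G : Finset (Finset (Fin n))) (hG : G.card = (Hfam n (k-1)).card + m') :
    ∃ P : Finset (Finset (Fin n)), P.card = m' ∧ Disjoint (Hfam n (k-1)) P ∧
      compCount G ≤ compCount (Hfam n (k-1) ∪ P) := by
  have mH' : ∀ F : Finset (Fin n), F ∈ Hfam n (k-1) ↔ F.card < k ∨ n < F.card + k := mem_H h1 h2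
  have tch := touch h1 h2 h3
  set H := Hfam n (k-1) with hH
  set S := H \ G with hS
  set Q := G \ H with hQ
  have hcS : S.card + (G ∩ H).card = H.card := by
    rw [Finset.inter_comm]; exact Finset.card_sdiff_add_card_inter _ _
  have hcQ : Q.card + (G ∩ H).card = G.card := Finset.card_sdiff_add_card_inter _ _
  have hQS : Q.card = S.card + m' := by omega
  obtain ⟨P, hPQ, hPc⟩ := Finset.exists_subset_card_eq (show m' ≤ Q.card by omega)
  have dHQ : Disjoint H Q := Finset.disjoint_sdiff
  have dHP : Disjoint H P := Finset.disjoint_of_subset_right hPQ dHQ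
  refine ⟨P, hPc, dHP, ?_⟩
  set R := Q \ P with hR
  have hRc : R.card = S.card := by
    rw [hR, Finset.card_sdiff_of_subset hPQ]; omega
  have hu : H ∪ Q = (H ∪ P) ∪ R := by
    rw [Finset.union_assoc, hR, Finset.union_sdiff_of_subset hPQ]
  have dR : Disjoint (H ∪ P) R := by
    rw [Finset.disjoint_union_left]
    exact ⟨Finset.disjoint_of_subset_right Finset.sdiff_subset dHQ, Finset.disjoint_sdiff⟩
  have up : compCount (H ∪ Q) ≤ compCount (H ∪ P) + ∑ g ∈ R, dg (H ∪ Q) g := by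
    rw [hu]; exact comp_union_le _ _ dR
  have q7 : 4 * 2^k ≤ 2^(n-k) := by
    have : 4 * 2^k = 2^(k+2) := by ring
    rw [this]; apply Nat.pow_le_pow_right <;> omega
  have up2 : 4 * ∑ g ∈ R, dg (H ∪ Q) g ≤ S.card * (5 * 2^(n-k)) := by
    rw [Finset.mul_sum, ← hRc, ← smul_eq_mul]
    apply Finset.sum_le_card_nsmul
    intro g hg
    have hgH : g ∉ H := (Finset.mem_sdiff.1 (Finset.mem_sdiff.1 hg).1).2
    rw [mH'] at hgH
    have := dg_le (H ∪ Q) g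
    have := pow_conv (n := n) (a := k) (j := g.card) (by omega) (by omega)
    omega
  have tc := tch S Finset.sdiff_subset
  have lo : compCount G + ((H ×ˢ H).filter (fun p => p.1 ⊂ p.2 ∧ (p.1 ∈ S ∨ p.2 ∈ S))).card ≤ compCount (H ∪ Q) := by
    unfold compCount crossComp
    rw [← Finset.card_union_of_disjoint]
    · apply Finset.card_le_card
      rintro ⟨A, B⟩ hAB
      simp only [mem_union, mem_filter, mem_product, hS, hQ, mem_sdiff] at hAB ⊢
      tauto
    · rw [Finset.disjoint_left]
      rintro ⟨A, B⟩ hAB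
      simp only [mem_filter, mem_product, hS, mem_sdiff] at hAB ⊢
      tauto
  omega


theorem stmt15 (n : ℕ) (hn : Even n) (k : ℕ)
    (hk1 : (n : ℝ) / 3 + Real.sqrt (2 * n * Real.log 2) ≤ k)
    (hk2 : (k : ℝ) < (n : ℝ) / 2)
    (m' : ℕ) (hm' : m' ≤ 2 * (n / 2).choose k)
    (X : Finset (Fin n)) (hX : X.card = n / 2)
    (𝒜 ℬ : Finset (Finset (Fin n)))
    (h𝒜card : 𝒜.card = m' / 2) (h𝒜 : ∀ A ∈ 𝒜, A ⊆ X ∧ A.card = k)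
    (hℬcard : ℬ.card = (m' + 1) / 2) (hℬ : ∀ B ∈ ℬ, X ⊆ B ∧ B.card = n - k) :
    maxComp n (Mnum n (k - 1) + m') = compCount (Hfam n (k - 1) ∪ 𝒜 ∪ ℬ) := by
  obtain ⟨h1, h2, h3⟩ := numeric n hn k hk1 hk2
  have mH : ∀ F : Finset (Fin n), F ∈ Hfam n (k-1) ↔ F.card < k ∨ n < F.card + k := mem_H h1 h2
  have h2k : 1 ≤ 2^k := Nat.one_le_two_pow
  obtain ⟨h, hh⟩ : ∃ h, h + 1 = tl (n-k) (k-1) + 2^k := ⟨tl (n-k) (k-1) + 2^k - 1, by omega⟩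
  have dAB : Disjoint 𝒜 ℬ := by
    rw [Finset.disjoint_left]; intro A hA hB
    have := (h𝒜 A hA).2
    have := (hℬ A hB).2
    omega
  have dH : Disjoint (Hfam n (k-1)) (𝒜 ∪ ℬ) := by
    rw [Finset.disjoint_left]; intro A hA hB
    rw [mH] at hA
    rcases Finset.mem_union.1 hB with hB | hB
    · have := (h𝒜 A hB).2
      omega
    · have := (hℬ A hB).2
      omega
  have hc : (𝒜 ∪ ℬ).card = m' := by
    rw [Finset.card_union_of_disjoint dAB]; omega
  rw [Finset.union_assoc]
  apply le_antisymm
  · unfold maxComp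
    apply Finset.sup_le
    intro G hG
    rw [Finset.mem_powersetCard] at hG
    obtain ⟨P, hPc, hPd, hle⟩ := push_H h1 h2 h3 G hG.2
    refine hle.trans ((main_upper hn h1 h2 h3 hm' P hPc hPd h hh).trans ?_)
    rw [comp_union _ _ dH]
    have e1 : ∑ G ∈ 𝒜 ∪ ℬ, dg (Hfam n (k-1)) G = m' * h := by
      rw [← hc]
      apply Finset.sum_const_nat
      intro G hG
      have : G.card = k ∨ G.card = n - k := by
        rcases Finset.mem_union.1 hG with hB | hB
        · exact Or.inl (h𝒜 G hB).2
        · exact Or.inr (hℬ G hB).2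
      have := dgH h1 h2 G this
      omega
    have e2 : (m'/2) * ((m'+1)/2) ≤ compCount (𝒜 ∪ ℬ) := by
      rw [← h𝒜card, ← hℬcard, ← Finset.card_product]
      unfold compCount crossComp
      apply Finset.card_le_card
      rintro ⟨A, B⟩ hAB
      rw [Finset.mem_product] at hAB
      have a1 := h𝒜 A hAB.1
      have b1 := hℬ B hAB.2
      rw [Finset.mem_filter, Finset.mem_product]
      refine ⟨⟨Finset.mem_union_left _ hAB.1, Finset.mem_union_right _ hAB.2⟩, ?_⟩
      refine Finset.ssubset_iff_subset_ne.2 ⟨a1.1.trans b1.1, ?_⟩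
      intro hE
      have := congrArg Finset.card hE
      simp only at this
      omega
    omega
  · unfold maxComp
    apply Finset.le_sup (f := compCount)
    rw [Finset.mem_powersetCard]
    refine ⟨Finset.subset_univ _, ?_⟩
    rw [Finset.card_union_of_disjoint dH, hc]; rfl
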